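/- Let M be a Hausdorff topological space, I an index type, Ω : I → Set M a family of open subsets, and r a reflexive and symmetric relation on I satisfying: (1) for all i, j, Ω i ∩ Ω j is preconnected; (2) r i j implies Ω i ∩ Ω j nonempty; (3) r i j, r j k and Ω i ∩ Ω j ∩ Ω k nonempty imply r i k. Suppose (N, φ, α) and (N', φ', α') are two triples where N, N' are Hausdorff topological spaces, φ : N → M and φ' : N' → M are local homeomorphisms, α i : Ω i → N and α' i : Ω i → N' are continuous, and each triple satisfies: (A) the images of the α i (resp. α' i) cover N (resp. N'); (B) r i j holds iff the images of α i and α j (resp. α' i and α' j) intersect; (C) φ (α i x) = x and φ' (α' i x) = x for all i and x ∈ Ω i. Then there exists a unique homeomorphism ψ : N → N' such that φ' ∘ ψ = φ and ψ ∘ α i = α' i for all i. -/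

import Mathlib

theorem join_agree {M I N : Type*} [TopologicalSpace M] (Ω : I → Set M)
    (h1 : ∀ i j, IsPreconnected (Ω i ∩ Ω j)) [TopologicalSpace N] [T2Space N]
    (φ : N → M) (α : ∀ i, Ω i → N) (hφ : IsLocalHomeomorph φ)
    (hα : ∀ i, Continuous (α i)) (hC : ∀ i (x : Ω i), φ (α i x) = (x : M))
    (i j : I) (h : (Set.range (α i) ∩ Set.range (α j)).Nonempty)
    (x : M) (hi : x ∈ Ω i) (hj : x ∈ Ω j) : α i ⟨x, hi⟩ = α j ⟨x, hj⟩ := by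
  obtain ⟨_, ⟨y, rfl⟩, ⟨z, hz⟩⟩ := h
  have hyz : (z : M) = y := by rw [← hC j z, hz, hC]
  obtain ⟨y, hy⟩ := y
  obtain ⟨z, hz'⟩ := z
  obtain rfl : z = y := hyz
  haveI : PreconnectedSpace ↥(Ω i ∩ Ω j) := isPreconnected_iff_preconnectedSpace.1 (h1 i j)
  have key := (T2Space.isSeparatedMap φ).eq_of_comp_eq hφ.isLocallyInjective
    (A := ↥(Ω i ∩ Ω j)) (g₁ := fun w => α i ⟨w, w.2.1⟩) (g₂ := fun w => α j ⟨w, w.2.2⟩)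
    ((hα i).comp (by fun_prop)) ((hα j).comp (by fun_prop))
    (by funext w; simp [hC]) ⟨z, hy, hz'⟩ hz.symm
  exact congrFun key ⟨x, hi, hj⟩

theorem join_map {M I N N' : Type*} [TopologicalSpace M] (Ω : I → Set M)
    (hΩ : ∀ i, IsOpen (Ω i))
    (h1 : ∀ i j, IsPreconnected (Ω i ∩ Ω j)) [TopologicalSpace N]
    [TopologicalSpace N'] [T2Space N']
    (φ : N → M) (φ' : N' → M) (α : ∀ i, Ω i → N) (α' : ∀ i, Ω i → N')
    (hφ : IsLocalHomeomorph φ) (hφ' : IsLocalHomeomorph φ')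
    (hα : ∀ i, Continuous (α i)) (hα' : ∀ i, Continuous (α' i))
    (hA : (⋃ i, Set.range (α i)) = Set.univ)
    (hB : ∀ i j, (Set.range (α i) ∩ Set.range (α j)).Nonempty →
      (Set.range (α' i) ∩ Set.range (α' j)).Nonempty)
    (hC : ∀ i (x : Ω i), φ (α i x) = (x : M))
    (hC' : ∀ i (x : Ω i), φ' (α' i x) = (x : M)) :
    ∃ f : N → N', Continuous f ∧ ∀ i x, f (α i x) = α' i x := by
  have cov : ∀ n, ∃ i x, α i x = n := fun n => by
    simpa using (hA ▸ Set.mem_univ n : n ∈ ⋃ i, Set.range (α i))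
  choose ι p hp using cov
  have hf : ∀ i x, α' (ι (α i x)) (p (α i x)) = α' i x := by
    intro i x
    have e := hp (α i x)
    have hx : ((p (α i x) : Ω _) : M) = x := by rw [← hC, e, hC]
    have hm : (x : M) ∈ Ω (ι (α i x)) := hx ▸ (p (α i x)).2
    have := join_agree Ω h1 φ' α' hφ' hα' hC' (ι (α i x)) i
      (hB _ _ ⟨α i x, ⟨_, e⟩, ⟨x, rfl⟩⟩) x hm x.2
    rw [← this]
    congr 1
    exact Subtype.ext hx
  refine ⟨fun n => α' (ι n) (p n), ?_, hf⟩
  rw [continuous_iff_continuousAt]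
  intro n
  have hemb : Topology.IsOpenEmbedding (α (ι n)) := by
    refine hφ.isOpenEmbedding_of_comp ?_ (hα _)
    have : φ ∘ α (ι n) = Subtype.val := funext (hC _)
    rw [this]
    exact (hΩ _).isOpenEmbedding_subtypeVal
  have := hemb.continuousAt_iff (f := α (ι n)) (g := fun n => α' (ι n) (p n)) (x := p n)
  refine hp n ▸ this.1 ?_
  have e : (fun n => α' (ι n) (p n)) ∘ α (ι n) = α' (ι n) := funext (hf _)
  rw [e]
  exact (hα' _).continuousAt

/-- Uniqueness part of the join construction (Theorem 2.2.1), stated topologically. -/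
theorem join_uniqueness.{u, v, w, x}
    (M : Type u) [TopologicalSpace M] [T2Space M]
    (I : Type v) (Ω : I → Set M) (hΩ : ∀ i, IsOpen (Ω i))
    (r : I → I → Prop) (hrefl : ∀ i, r i i) (hsymm : ∀ i j, r i j → r j i)
    (h1 : ∀ i j, IsPreconnected (Ω i ∩ Ω j))
    (h2 : ∀ i j, r i j → (Ω i ∩ Ω j).Nonempty)
    (h3 : ∀ i j k, r i j → r j k → (Ω i ∩ Ω j ∩ Ω k).Nonempty → r i k)
    (N : Type w) [TopologicalSpace N] [T2Space N]
    (N' : Type x) [TopologicalSpace N'] [T2Space N']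
    (φ : N → M) (φ' : N' → M) (α : ∀ i, Ω i → N) (α' : ∀ i, Ω i → N')
    (hφ : IsLocalHomeomorph φ) (hφ' : IsLocalHomeomorph φ')
    (hα : ∀ i, Continuous (α i)) (hα' : ∀ i, Continuous (α' i))
    (hA : (⋃ i, Set.range (α i)) = Set.univ)
    (hA' : (⋃ i, Set.range (α' i)) = Set.univ)
    (hB : ∀ i j, r i j ↔ (Set.range (α i) ∩ Set.range (α j)).Nonempty)
    (hB' : ∀ i j, r i j ↔ (Set.range (α' i) ∩ Set.range (α' j)).Nonempty)
    (hC : ∀ i (x : Ω i), φ (α i x) = (x : M))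
    (hC' : ∀ i (x : Ω i), φ' (α' i x) = (x : M)) :
    ∃! ψ : N ≃ₜ N', (∀ x, φ' (ψ x) = φ x) ∧ ∀ i (x : Ω i), ψ (α i x) = α' i x := by
  have cov : ∀ n, ∃ i x, α i x = n := fun n => by
    simpa using (hA ▸ Set.mem_univ n : n ∈ ⋃ i, Set.range (α i))
  have cov' : ∀ n, ∃ i x, α' i x = n := fun n => by
    simpa using (hA' ▸ Set.mem_univ n : n ∈ ⋃ i, Set.range (α' i))
  obtain ⟨f, hf, hfa⟩ := join_map Ω hΩ h1 φ φ' α α' hφ hφ' hα hα' hA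
    (fun i j h => (hB' i j).1 ((hB i j).2 h)) hC hC'
  obtain ⟨g, hg, hga⟩ := join_map Ω hΩ h1 φ' φ α' α hφ' hφ hα' hα hA'
    (fun i j h => (hB i j).1 ((hB' i j).2 h)) hC' hC
  refine ⟨⟨⟨f, g, ?_, ?_⟩, hf, hg⟩, ⟨?_, hfa⟩, ?_⟩
  · intro n
    obtain ⟨i, x, rfl⟩ := cov n
    rw [hfa, hga]
  · intro n
    obtain ⟨i, x, rfl⟩ := cov' n
    rw [hga, hfa]
  · intro n
    obtain ⟨i, x, rfl⟩ := cov n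
    change φ' (f _) = _
    rw [hfa, hC, hC']
  · rintro ψ ⟨-, hψ⟩
    ext n
    obtain ⟨i, x, rfl⟩ := cov n
    rw [hψ]
    exact (hfa i x).symm
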